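/- arXiv:1110.5369 — 3 statements merged into one kernel-verified Lean document; each statement's English description precedes it below -/
import Mathlib

section
/- The ℚ-algebra homomorphism ψ : ℚ[e_1,…,e_n] → H⁰(M_1(𝒜)) sending e_i to the Heaviside function x_i is surjective, and its kernel 𝓘₁ is the ideal generated by the following three families of polynomials: (1) e_i² − e_i for all i; (2) ∏_{i∈S⁺} e_i · ∏_{j∈S⁻} (e_j − 1) for all pairs of disjoint subsets S⁺, S⁻ ⊆ {1,…,n} such that ⋂_{i∈S⁺} H_i⁺ ∩ ⋂_{j∈S⁻} H_j⁻ = ∅; (3) ∏_{i∈S⁺} e_i · ∏_{j∈S⁻} (e_j − 1) − ∏_{i∈S⁺} (e_i − 1) · ∏_{j∈S⁻} e_j for all pairs of disjoint subsets S⁺, S⁻ ⊆ {1,…,n} such that ⋂_{i∈S⁺} H_i⁺ ∩ ⋂_{j∈S⁻} H_j⁻ = ∅ and ⋂_{i∈S⁺∪S⁻} H_i ≠ ∅. -/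
/-!
Modulo `e i ^ 2 - e i`, the ring `ℚ[e₁,…,eₙ]` becomes the ring of functions on the set of sign
patterns `S ⊆ {1,…,n}`: the polynomials `vgDelta S = ∏_{i∈S} e i · ∏_{j∉S} (1 - e j)` sum to `1`
(`sum_vgDelta`), and `p · vgDelta S ≡ p(1_S) · vgDelta S` (`mul_vgDelta_sub_mem`), where `1_S` is
the indicator of `S`. The homomorphism `ψ` sends `vgDelta S` to the indicator function of the
chamber with sign pattern `S`.

Surjectivity: chambers are convex, so a locally constant function is constant on each of them and
is therefore a linear combination of the functions `ψ (vgDelta S)`.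

Kernel: if `ψ p = 0`, then `p(1_S) = 0` whenever the chamber of `S` is nonempty, while for an empty
chamber `vgDelta S` is, up to sign, a member of family (2). Hence `p ≡ ∑ p(1_S) · vgDelta S` lies in
the ideal. Conversely family (3) is in the kernel because reflecting in a point of
`⋂ H i` exchanges the two open cones, so that both are empty.
-/

/-!
Varchenko–Gelfand presentation of the ring of locally constant functions on the
complement of a real affine hyperplane arrangement (Statement 0).
-/

open MvPolynomial Set

variable {V : Type*} [NormedAddCommGroup V] [NormedSpace ℝ V] [FiniteDimensional ℝ V]
variable {n : ℕ}

/-- The complement `M₁(𝒜)` of the arrangement given by the affine forms `ω i`. -/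
def M₁ (ω : Fin n → V →ᵃ[ℝ] ℝ) : Set V := {v | ∀ i, ω i v ≠ 0}

/-- The hyperplane `H i`. -/
def Hyp (ω : Fin n → V →ᵃ[ℝ] ℝ) (i : Fin n) : Set V := {v | ω i v = 0}

/-- The open positive half-space `H i⁺`. -/
def Hplus (ω : Fin n → V →ᵃ[ℝ] ℝ) (i : Fin n) : Set V := {v | 0 < ω i v}

/-- The open negative half-space `H i⁻`. -/
def Hminus (ω : Fin n → V →ᵃ[ℝ] ℝ) (i : Fin n) : Set V := {v | ω i v < 0}

/-- The Heaviside function `x i`: the locally constant function on `M₁(𝒜)` which is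
`1` on `H i⁺` and `0` on `H i⁻`. -/
noncomputable def heaviside (ω : Fin n → V →ᵃ[ℝ] ℝ) (i : Fin n) :
    LocallyConstant (M₁ ω) ℚ where
  toFun v := if 0 < ω i v.1 then 1 else 0
  isLocallyConstant := by
    rw [IsLocallyConstant.iff_exists_open]
    rintro ⟨v, hv⟩
    rcases lt_or_gt_of_ne (hv i) with h | h
    · refine ⟨{w : M₁ ω | ω i w.1 < 0}, ?_, h, fun w hw => ?_⟩
      · exact (isOpen_lt ((ω i).continuous_of_finiteDimensional.comp
          continuous_subtype_val) continuous_const)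
      · simp only [Set.mem_setOf_eq] at hw
        simp [not_lt.mpr hw.le, not_lt.mpr h.le]
    · refine ⟨{w : M₁ ω | 0 < ω i w.1}, ?_, h, fun w hw => ?_⟩
      · exact (isOpen_lt continuous_const ((ω i).continuous_of_finiteDimensional.comp
          continuous_subtype_val))
      · simp only [Set.mem_setOf_eq] at hw
        simp [hw, h]

/-- Family (1): `e i ^ 2 - e i`. -/
def fam1 (n : ℕ) : Set (MvPolynomial (Fin n) ℚ) :=
  {p | ∃ i : Fin n, p = X i ^ 2 - X i}

/-- Family (2): `∏_{i ∈ S⁺} e i · ∏_{j ∈ S⁻} (e j - 1)` for disjoint `S⁺`, `S⁻` with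
`⋂_{i∈S⁺} H i⁺ ∩ ⋂_{j∈S⁻} H j⁻ = ∅`. -/
def fam2 (ω : Fin n → V →ᵃ[ℝ] ℝ) : Set (MvPolynomial (Fin n) ℚ) :=
  {p | ∃ Sp Sm : Finset (Fin n), Disjoint Sp Sm ∧
    (⋂ i ∈ Sp, Hplus ω i) ∩ (⋂ j ∈ Sm, Hminus ω j) = ∅ ∧
    p = (∏ i ∈ Sp, X i) * ∏ j ∈ Sm, (X j - 1)}

/-- Family (3): differences of the two orientations, when moreover
`⋂_{i ∈ S⁺ ∪ S⁻} H i ≠ ∅`. -/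
def fam3 (ω : Fin n → V →ᵃ[ℝ] ℝ) : Set (MvPolynomial (Fin n) ℚ) :=
  {p | ∃ Sp Sm : Finset (Fin n), Disjoint Sp Sm ∧
    (⋂ i ∈ Sp, Hplus ω i) ∩ (⋂ j ∈ Sm, Hminus ω j) = ∅ ∧
    (⋂ i ∈ (Sp ∪ Sm : Finset (Fin n)), Hyp ω i) ≠ ∅ ∧
    p = (∏ i ∈ Sp, X i) * (∏ j ∈ Sm, (X j - 1)) -
      (∏ i ∈ Sp, (X i - 1)) * ∏ j ∈ Sm, X j}

/-- The polynomial `∏_{i∈S} e i · ∏_{j∉S} (1 - e j)`, representing the indicator of the sign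
pattern `S`. -/
noncomputable def vgDelta (S : Finset (Fin n)) : MvPolynomial (Fin n) ℚ :=
  (∏ i ∈ S, X i) * ∏ j ∈ Finset.univ \ S, (1 - X j)

/-- The set of indices `i` with `ω i v > 0`; for `v` in the complement it determines the chamber
containing `v`. -/
noncomputable def vgSign (ω : Fin n → V →ᵃ[ℝ] ℝ) (v : V) : Finset (Fin n) :=
  {i | 0 < ω i v}

lemma mem_vgSign {ω : Fin n → V →ᵃ[ℝ] ℝ} {v : V} {i : Fin n} :
    i ∈ vgSign ω v ↔ 0 < ω i v := by
  simp [vgSign]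

lemma sum_vgDelta : ∑ S : Finset (Fin n), vgDelta S = 1 := by
  have h := Finset.prod_add (fun i : Fin n => (X i : MvPolynomial (Fin n) ℚ))
    (fun i => 1 - X i) Finset.univ
  simp only [add_sub_cancel, Finset.prod_const_one, Finset.powerset_univ] at h
  exact h.symm

lemma X_mul_vgDelta_sub_mem (S : Finset (Fin n)) (i : Fin n) :
    X i * vgDelta S - C (if i ∈ S then 1 else 0) * vgDelta S ∈ Ideal.span (fam1 n) := by
  have hi : (X i ^ 2 - X i : MvPolynomial (Fin n) ℚ) ∈ Ideal.span (fam1 n) :=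
    Ideal.subset_span ⟨i, rfl⟩
  unfold vgDelta
  by_cases h : i ∈ S
  · rw [← Finset.mul_prod_erase S _ h]
    convert Ideal.mul_mem_left _ ((∏ k ∈ S.erase i, X k) * ∏ j ∈ Finset.univ \ S, (1 - X j)) hi
      using 1
    simp only [h, if_true, C_1]
    ring
  · have h' : i ∈ Finset.univ \ S := by simp [h]
    rw [← Finset.mul_prod_erase _ (fun j => (1 - X j : MvPolynomial (Fin n) ℚ)) h']
    convert Ideal.mul_mem_left _
      (-((∏ k ∈ S, X k) * ∏ j ∈ (Finset.univ \ S).erase i, (1 - X j))) hi using 1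
    simp only [h, if_false, C_0]
    ring

/-- Modulo family (1), multiplying by `vgDelta S` evaluates a polynomial at the indicator
vector of `S`. -/
lemma mul_vgDelta_sub_mem (S : Finset (Fin n)) (p : MvPolynomial (Fin n) ℚ) :
    p * vgDelta S - C (eval (fun i => if i ∈ S then 1 else 0) p) * vgDelta S
      ∈ Ideal.span (fam1 n) := by
  induction p using MvPolynomial.induction_on with
  | C a => simp
  | add p q hp hq =>
    convert Ideal.add_mem _ hp hq using 1
    simp only [map_add]
    ring
  | mul_X p i hp =>
    convert Ideal.add_mem _ (Ideal.mul_mem_left _ (X i) hp)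
      (Ideal.mul_mem_left _ (C (eval (fun i => if i ∈ S then 1 else 0) p))
        (X_mul_vgDelta_sub_mem S i)) using 1
    simp only [map_mul, eval_X]
    ring

/-- The value of `ψ p` at `v` is `p` evaluated at the indicator of the sign pattern of `v`. -/
lemma aeval_heaviside_apply (ω : Fin n → V →ᵃ[ℝ] ℝ) (p : MvPolynomial (Fin n) ℚ) (v : M₁ ω) :
    aeval (R := ℚ) (heaviside ω) p v
      = eval (fun i => if i ∈ vgSign ω v.1 then 1 else 0) p := by
  induction p using MvPolynomial.induction_on with
  | C a => simp [algebraMap_eq]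
  | add p q hp hq => simp [hp, hq]
  | mul_X p i hp =>
    rw [map_mul, LocallyConstant.mul_apply, hp, map_mul, aeval_X, eval_X]
    simp [heaviside, mem_vgSign]

lemma eval_vgDelta (S T : Finset (Fin n)) :
    eval (fun i => if i ∈ T then (1 : ℚ) else 0) (vgDelta S) = if S = T then 1 else 0 := by
  simp only [vgDelta, map_mul, map_prod, map_sub, map_one, eval_X]
  split_ifs with h
  · subst h
    rw [Finset.prod_eq_one, Finset.prod_eq_one, one_mul]
    · intro i hi
      simp [(Finset.mem_sdiff.mp hi).2]
    · intro i hi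
      simp [hi]
  · by_cases hs : S ⊆ T
    · obtain ⟨i, hi, hi'⟩ : ∃ i ∈ T, i ∉ S := by
        by_contra! hc
        exact h (hs.antisymm hc)
      rw [Finset.prod_eq_zero (i := i) (s := Finset.univ \ S), mul_zero]
      · simp [hi']
      · simp [hi]
    · obtain ⟨i, hi, hi'⟩ := Finset.not_subset.mp hs
      rw [Finset.prod_eq_zero (i := i) (s := S), zero_mul]
      · exact hi
      · simp [hi']

/-- Two points of the complement with the same sign pattern are joined by a segment in it, so
locally constant functions agree on them. -/
lemma apply_eq_of_vgSign_eq (ω : Fin n → V →ᵃ[ℝ] ℝ) (f : LocallyConstant (M₁ ω) ℚ)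
    (v w : M₁ ω) (h : vgSign ω v.1 = vgSign ω w.1) : f v = f w := by
  have hiff : ∀ i, 0 < ω i v.1 ↔ 0 < ω i w.1 := fun i => by
    rw [← mem_vgSign, h, mem_vgSign]
  have hseg : segment ℝ v.1 w.1 ⊆ M₁ ω := by
    intro x hx i
    by_cases hv : 0 < ω i v.1
    · have hc : Convex ℝ (ω i ⁻¹' Ioi 0) := (convex_Ioi 0).affine_preimage (ω i)
      exact (show 0 < ω i x from hc.segment_subset hv ((hiff i).1 hv) hx).ne'
    · have hc : Convex ℝ (ω i ⁻¹' Iio 0) := (convex_Iio 0).affine_preimage (ω i)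
      have hw : ¬ 0 < ω i w.1 := fun hw => hv ((hiff i).2 hw)
      exact (show ω i x < 0 from hc.segment_subset (lt_of_le_of_ne (not_lt.1 hv) (v.2 i))
        (lt_of_le_of_ne (not_lt.1 hw) (w.2 i)) hx).ne
  have hpre : IsPreconnected ((↑) ⁻¹' segment ℝ v.1 w.1 : Set (M₁ ω)) := by
    rw [← Topology.IsInducing.subtypeVal.isPreconnected_image, Subtype.image_preimage_coe,
      inter_eq_right.2 hseg]
    exact (convex_segment _ _).isPreconnected
  exact f.isLocallyConstant.apply_eq_of_isPreconnected hpre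
    (left_mem_segment ℝ v.1 w.1) (right_mem_segment ℝ v.1 w.1)

lemma aeval_heaviside_surjective (ω : Fin n → V →ᵃ[ℝ] ℝ) :
    Function.Surjective (aeval (R := ℚ) (heaviside ω)) := by
  classical
  intro f
  -- `c S` is the value of `f` on the chamber of `S`, and `0` if that chamber is empty.
  let c : Finset (Fin n) → ℚ := fun S =>
    if h : ∃ v : M₁ ω, vgSign ω v.1 = S then f h.choose else 0
  refine ⟨∑ S, C (c S) * vgDelta S, ?_⟩
  ext v
  have hv : ∃ w : M₁ ω, vgSign ω w.1 = vgSign ω v.1 := ⟨v, rfl⟩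
  have hc : c (vgSign ω v.1) = f v := by
    simp only [c, dif_pos hv]
    exact apply_eq_of_vgSign_eq ω f _ _ hv.choose_spec
  rw [aeval_heaviside_apply, map_sum]
  simp [eval_vgDelta, hc]

/-- If the chamber of the sign pattern `S` is empty, then `vgDelta S` is, up to sign, a member of
family (2). -/
lemma vgDelta_mem_of_empty (ω : Fin n → V →ᵃ[ℝ] ℝ) (S : Finset (Fin n))
    (hS : ¬ ∃ v : M₁ ω, vgSign ω v.1 = S) : vgDelta S ∈ Ideal.span (fam2 ω) := by
  have hmem : (∏ i ∈ S, X i) * ∏ j ∈ Finset.univ \ S, (X j - 1) ∈ Ideal.span (fam2 ω) := by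
    refine Ideal.subset_span ⟨S, Finset.univ \ S, Finset.disjoint_sdiff, ?_, rfl⟩
    rw [eq_empty_iff_forall_notMem]
    rintro v ⟨hp, hm⟩
    simp only [mem_iInter, Hplus, Hminus, mem_setOf_eq, Finset.mem_sdiff, Finset.mem_univ,
      true_and] at hp hm
    refine hS ⟨⟨v, fun i => ?_⟩, ?_⟩
    · by_cases hi : i ∈ S
      · exact (hp i hi).ne'
      · exact (hm i hi).ne
    · ext i
      rw [mem_vgSign]
      refine ⟨fun h => ?_, hp i⟩
      by_contra hi
      exact lt_asymm h (hm i hi)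
  convert Ideal.mul_mem_left _ (∏ j ∈ Finset.univ \ S, (-1 : MvPolynomial (Fin n) ℚ)) hmem using 1
  rw [vgDelta, mul_left_comm, ← Finset.prod_mul_distrib]
  simp

lemma aeval_eq_zero_of_inter_empty (ω : Fin n → V →ᵃ[ℝ] ℝ) (Sp Sm : Finset (Fin n))
    (h : (⋂ i ∈ Sp, Hplus ω i) ∩ (⋂ j ∈ Sm, Hminus ω j) = ∅) :
    aeval (R := ℚ) (heaviside ω) ((∏ i ∈ Sp, X i) * ∏ j ∈ Sm, (X j - 1)) = 0 := by
  ext v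
  rw [aeval_heaviside_apply, LocallyConstant.zero_apply]
  by_contra hne
  simp only [map_mul, map_prod, map_sub, map_one, eval_X, mul_ne_zero_iff,
    Finset.prod_ne_zero_iff, mem_vgSign] at hne
  refine eq_empty_iff_forall_notMem.1 h v.1 ⟨?_, ?_⟩
  · simp only [mem_iInter, Hplus, mem_setOf_eq]
    intro i hi
    simpa using hne.1 i hi
  · simp only [mem_iInter, Hminus, mem_setOf_eq]
    intro i hi
    have := hne.2 i hi
    refine lt_of_le_of_ne (not_lt.1 fun h0 => ?_) (v.2 i)
    simp [h0] at this

/-- Reflection in a common point of the hyperplanes exchanges the two opposite open cones. -/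
lemma inter_empty_swap (ω : Fin n → V →ᵃ[ℝ] ℝ) (Sp Sm : Finset (Fin n))
    (h : (⋂ i ∈ Sp, Hplus ω i) ∩ (⋂ j ∈ Sm, Hminus ω j) = ∅)
    (h0 : (⋂ i ∈ (Sp ∪ Sm : Finset (Fin n)), Hyp ω i) ≠ ∅) :
    (⋂ i ∈ Sm, Hplus ω i) ∩ (⋂ j ∈ Sp, Hminus ω j) = ∅ := by
  obtain ⟨x, hx⟩ := nonempty_iff_ne_empty.2 h0
  simp only [mem_iInter, Hyp, mem_setOf_eq, Finset.mem_union] at hx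
  rw [eq_empty_iff_forall_notMem] at h ⊢
  rintro v ⟨hp, hm⟩
  simp only [mem_iInter, Hplus, Hminus, mem_setOf_eq] at hp hm
  have key : ∀ i, ω i x = 0 → ω i (AffineMap.lineMap x v (-1 : ℝ)) = - ω i v := by
    intro i hi
    rw [AffineMap.apply_lineMap, hi, AffineMap.lineMap_apply]
    simp
  refine h (AffineMap.lineMap x v (-1 : ℝ)) ⟨?_, ?_⟩
  · simp only [mem_iInter, Hplus, mem_setOf_eq]
    intro i hi
    rw [key i (hx i (Or.inl hi))]
    exact neg_pos.2 (hm i hi)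
  · simp only [mem_iInter, Hminus, mem_setOf_eq]
    intro i hi
    rw [key i (hx i (Or.inr hi))]
    exact neg_lt_zero.2 (hp i hi)

/-- Varchenko–Gelfand. The map `ψ : ℚ[e₁,…,eₙ] → H⁰(M₁(𝒜))` sending
`e i` to the Heaviside function `x i` is surjective, and its kernel is generated by
families (1), (2) and (3). -/
theorem vg_presentation (ω : Fin n → V →ᵃ[ℝ] ℝ) (hω : ∀ i, (ω i).linear ≠ 0) :
    Function.Surjective (MvPolynomial.aeval (R := ℚ) (heaviside ω)) ∧
    RingHom.ker (MvPolynomial.aeval (R := ℚ) (heaviside ω)).toRingHom =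
      Ideal.span (fam1 n ∪ fam2 ω ∪ fam3 ω) := by
  refine ⟨aeval_heaviside_surjective ω, le_antisymm ?_ ?_⟩
  · intro p hp
    have hp0 : aeval (R := ℚ) (heaviside ω) p = 0 := hp
    have hsum : p = ∑ S : Finset (Fin n), p * vgDelta S := by
      rw [← Finset.mul_sum, sum_vgDelta, mul_one]
    rw [hsum]
    refine Ideal.sum_mem _ fun S _ => ?_
    by_cases hS : ∃ v : M₁ ω, vgSign ω v.1 = S
    · obtain ⟨v, rfl⟩ := hS
      have hev := aeval_heaviside_apply ω p v
      rw [hp0, LocallyConstant.zero_apply] at hev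
      have h1 := mul_vgDelta_sub_mem (vgSign ω v.1) p
      rw [← hev, C_0, zero_mul, sub_zero] at h1
      exact Ideal.span_mono (subset_union_left.trans subset_union_left) h1
    · exact Ideal.mul_mem_left _ _ (Ideal.span_mono
        (subset_union_right.trans subset_union_left) (vgDelta_mem_of_empty ω S hS))
  · rw [Ideal.span_le]
    rintro p ((⟨i, rfl⟩ | ⟨Sp, Sm, -, h, rfl⟩) | ⟨Sp, Sm, -, h, h0, rfl⟩)
    · change aeval (R := ℚ) (heaviside ω) _ = 0
      ext v
      rw [aeval_heaviside_apply]
      simp only [map_sub, map_pow, eval_X, LocallyConstant.zero_apply]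
      split_ifs <;> simp
    · exact aeval_eq_zero_of_inter_empty ω Sp Sm h
    · change aeval (R := ℚ) (heaviside ω) _ = 0
      rw [map_sub, aeval_eq_zero_of_inter_empty ω Sp Sm h, mul_comm,
        aeval_eq_zero_of_inter_empty ω Sm Sp (inter_empty_swap ω Sp Sm h h0), sub_zero]
end

section
/- Let (E, 𝒞) be a loop-free oriented matroid given by its signed circuits. With respect to the filtration of P(𝒞) by polynomial degree in the generators x_a, the associated graded algebra ⊕_{k≥0} P^k/P^{k−1} of P(𝒞) is isomorphic as a graded ℚ-algebra to 𝔸(𝒞). -/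
/-!
Write `I = pIdeal 𝒞` and `J = aIdeal 𝒞`. The theorem amounts to the equality of `J` with the
ideal of leading forms of `I`; the isomorphism sends the class of a polynomial of degree at
most `k` in `Pᵏ/Pᵏ⁻¹` to the class of its component of degree `k` in `𝔸(𝒞)`.

*Elements of `J` are leading forms* (`aIdeal_lift`). `x_a²` is the leading form of `x_a² - x_a`.
For a circuit `Y` the generators of `I` attached to `Y` and `-Y` have, up to sign, the same term
of top degree, and the leading form of their signed difference is `∂̃(Y)` (`tpartial_lift`).

*Leading forms lie in `J`* (`leading_mem_aIdeal`). Call a set NBC if it contains no circuit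
support with its least element removed. The relations `∂̃(Y)` rewrite each monomial modulo `J`
as a combination of NBC monomials of the same degree (`homog_reduce`); hence NBC monomials also
span modulo `I`, compatibly with degrees (`reduce_pIdeal`). They are linearly independent
modulo `I` (`nbcSpan_inf_pIdeal`), so the NBC part of the leading form of an element of `I`
must vanish.

The independence (`nbc_indep`) is proved by evaluating at the points of `{0,1}^E` containing no
circuit, by induction on the ground set, removing its largest element `e`. A point of the
contraction by `e` has both of its extensions admissible, and the difference of the two values
isolates the coefficients of the sets containing `e`; a point of the deletion of `e` has at least
one admissible extension, by circuit elimination. The induction runs over families of nonempty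
signed sets subject to elimination, so that contraction is simply the removal of `e` from each
member, without passing to minimal supports.
-/

/-!
Statement 4: for a loop-free oriented matroid `(E, 𝒞)` given by its signed circuits,
the associated graded algebra of the degree filtration on the Gelfand–Rybnikov algebra
`P(𝒞)` is isomorphic as a graded `ℚ`-algebra to the Cordovil algebra `𝔸(𝒞)`.
Signed subsets of `E` are encoded as pairs of disjoint finsets `(X⁺, X⁻)`.
-/

open MvPolynomial

variable {E : Type*} [Fintype E] [LinearOrder E]

/-- The ideal defining `P(𝒞)`: generated by `x a ^ 2 - x a` and
`(∏_{a∈X⁺} x a)·(∏_{a∈X⁻} (1 - x a))` for `X ∈ 𝒞`. -/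
noncomputable def pIdeal (𝒞 : Set (Finset E × Finset E)) : Ideal (MvPolynomial E ℚ) :=
  Ideal.span ({p | ∃ a : E, p = X a ^ 2 - X a} ∪
    {p | ∃ C ∈ 𝒞, p = (∏ a ∈ C.1, X a) * ∏ a ∈ C.2, (1 - X a)})

/-- The algebra `P(𝒞)`. -/
abbrev PAlg (𝒞 : Set (Finset E × Finset E)) := MvPolynomial E ℚ ⧸ pIdeal 𝒞

/-- The degree filtration on `P(𝒞)`: `Pᵏ` is the image of the polynomials of total
degree at most `k`. -/
noncomputable def pFil (𝒞 : Set (Finset E × Finset E)) (k : ℕ) :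
    Submodule ℚ (PAlg 𝒞) :=
  Submodule.map (Ideal.Quotient.mkₐ ℚ (pIdeal 𝒞)).toLinearMap
    (MvPolynomial.restrictTotalDegree E ℚ k)

/-- The previous step `Pᵏ⁻¹` of the filtration, with `P⁻¹ = 0`. -/
noncomputable def pPrev (𝒞 : Set (Finset E × Finset E)) : ℕ → Submodule ℚ (PAlg 𝒞)
  | 0 => ⊥
  | (k + 1) => pFil 𝒞 k

/-- The `k`-th graded piece `Pᵏ/Pᵏ⁻¹` of the associated graded of the filtration. -/
noncomputable abbrev pGr (𝒞 : Set (Finset E × Finset E)) (k : ℕ) :=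
  ↥(pFil 𝒞 k) ⧸ Submodule.comap (pFil 𝒞 k).subtype (pPrev 𝒞 k)

/-- The boundary `∂̃(X) = Σ_{a∈X̲} Φ_X(a) ∏_{b∈X̲, b≠a} x_b` of a signed subset. -/
noncomputable def tpartial (C : Finset E × Finset E) : MvPolynomial E ℚ :=
  ∑ a ∈ C.1 ∪ C.2, (if a ∈ C.1 then (1 : MvPolynomial E ℚ) else -1) *
    ∏ b ∈ (C.1 ∪ C.2).erase a, X b

/-- The ideal defining the Cordovil algebra `𝔸(𝒞)`: generated by `x a ^ 2` and by
`∂̃(X)` for the circuits `X ∈ 𝒞` normalized so that the least element of the support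
lies in `X⁺`. -/
noncomputable def aIdeal (𝒞 : Set (Finset E × Finset E)) : Ideal (MvPolynomial E ℚ) :=
  Ideal.span ({p | ∃ a : E, p = X a ^ 2} ∪
    {p | ∃ C ∈ 𝒞, (∃ h : (C.1 ∪ C.2).Nonempty, (C.1 ∪ C.2).min' h ∈ C.1) ∧
      p = tpartial C})

/-- The Cordovil algebra `𝔸(𝒞)`. -/
abbrev AAlg (𝒞 : Set (Finset E × Finset E)) := MvPolynomial E ℚ ⧸ aIdeal 𝒞

/-- The degree-`k` graded component of `𝔸(𝒞)`. -/
noncomputable def aGrade (𝒞 : Set (Finset E × Finset E)) (k : ℕ) :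
    Submodule ℚ (AAlg 𝒞) :=
  Submodule.map (Ideal.Quotient.mkₐ ℚ (aIdeal 𝒞)).toLinearMap
    (MvPolynomial.homogeneousSubmodule E ℚ k)

set_option linter.unusedSectionVars false

/-! ### Independence of NBC sets over the points containing no circuit -/

section NBC

/-- A subset is NBC (no broken circuit) for a family of signed sets if it does not contain
the support of a member of the family with its least element removed. -/
def IsNBC (𝒱 : Set (Finset E × Finset E)) (S : Finset E) : Prop :=
  ∀ X ∈ 𝒱, ∀ m ∈ X.1 ∪ X.2, (∀ b ∈ X.1 ∪ X.2, m ≤ b) → ¬ (X.1 ∪ X.2).erase m ⊆ S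

/-- The positive part `t` of a sign vector without zeros (a point of `{0,1}^E`) which does not
contain any member of the family as a signed subset. For the circuits of an oriented matroid
these are the acyclic reorientations, and the points at which the ideal of `P(𝒞)` vanishes. -/
def IsTope (𝒱 : Set (Finset E × Finset E)) (t : Finset E) : Prop :=
  ∀ X ∈ 𝒱, ¬ (X.1 ⊆ t ∧ Disjoint X.2 t)

/-- If a function `c` supported on NBC sets has `∑_{S ⊆ t} c S = 0` for all `t` containing no
member of the family, then `c = 0`. Here `∑_{S ⊆ t} c S` is the value of `∑ c S ∏_{a ∈ S} x_a`
at the indicator of `t`. -/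
theorem nbc_indep (A : Finset E) : ∀ (𝒱 : Set (Finset E × Finset E)),
    (∀ X ∈ 𝒱, X.1 ∪ X.2 ⊆ A) →
    (∀ X ∈ 𝒱, (X.1 ∪ X.2).Nonempty) →
    (∀ X ∈ 𝒱, ∀ Y ∈ 𝒱, X ≠ (Y.2, Y.1) → ∀ e ∈ X.1 ∩ Y.2,
      ∃ Z ∈ 𝒱, Z.1 ⊆ (X.1 ∪ Y.1).erase e ∧ Z.2 ⊆ (X.2 ∪ Y.2).erase e) →
    ∀ c : Finset E → ℚ, (∀ S ⊆ A, c S ≠ 0 → IsNBC 𝒱 S) →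
    (∀ t ⊆ A, IsTope 𝒱 t → ∑ S ∈ t.powerset, c S = 0) →
    ∀ S ⊆ A, c S = 0 := by
  induction A using Finset.induction_on_max with
  | empty =>
    intro 𝒱 hA hne _ c _ ht S hS
    have := ht ∅ (by simp) (fun X hX => by
      have h1 := hA X hX
      have h2 := hne X hX
      rw [Finset.subset_empty] at h1
      simp [h1] at h2)
    rw [Finset.subset_empty] at hS
    simpa [hS] using this
  | insert e A he ih =>
    intro 𝒱 hA hne hel c hc ht
    have heA : e ∉ A := fun h => lt_irrefl _ (he e h)
    by_cases hloop : ∃ X ∈ 𝒱, X.1 ∪ X.2 = {e}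
    · -- a loop makes the empty set broken, so that no set is NBC
      obtain ⟨X, hX, hXe⟩ := hloop
      intro S hS
      by_contra h
      exact hc S hS h X hX e (by simp [hXe]) (by simp [hXe]) (by simp [hXe])
    -- contraction of `e`
    have hcon : ∀ S ⊆ A, c (insert e S) = 0 := by
      refine ih ((fun X : Finset E × Finset E => (X.1.erase e, X.2.erase e)) '' 𝒱)
        ?_ ?_ ?_ (fun S => c (insert e S)) ?_ ?_
      · rintro _ ⟨X, hX, rfl⟩
        have := hA X hX
        rw [← Finset.erase_union_distrib]
        exact Finset.subset_insert_iff.1 this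
      · rintro _ ⟨X, hX, rfl⟩
        rw [← Finset.erase_union_distrib]
        rw [Finset.nonempty_iff_ne_empty]
        intro h
        rw [Finset.erase_eq_empty_iff] at h
        rcases h with h | h
        · exact (hne X hX).ne_empty h
        · exact hloop ⟨X, hX, h⟩
      · rintro _ ⟨X, hX, rfl⟩ _ ⟨Y, hY, rfl⟩ hXY f hf
        simp only [Finset.mem_inter, Finset.mem_erase] at hf
        obtain ⟨Z, hZ, h1, h2⟩ := hel X hX Y hY (by rintro rfl; exact hXY rfl) f
          (by simp [hf])
        refine ⟨_, ⟨Z, hZ, rfl⟩, ?_, ?_⟩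
        · intro a ha
          have := @h1 a
          simp at this ha ⊢
          tauto
        · intro a ha
          have := @h2 a
          simp at this ha ⊢
          tauto
      · rintro S hS hcS _ ⟨X, hX, rfl⟩ m hm hmin hsub
        simp only [← Finset.erase_union_distrib] at hm hmin hsub
        have hmA : m ∈ A := by
          have := hA X hX (Finset.mem_of_mem_erase hm)
          have h2 := Finset.ne_of_mem_erase hm
          simpa [h2] using this
        refine hc (insert e S) (Finset.insert_subset_insert _ hS) hcS X hX m
          (Finset.mem_of_mem_erase hm) ?_ ?_
        · intro b hb
          by_cases hbe : b = e
          · rw [hbe]; exact (he m hmA).le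
          · exact hmin b (Finset.mem_erase.2 ⟨hbe, hb⟩)
        · intro b hb
          by_cases hbe : b = e
          · simp [hbe]
          · refine Finset.mem_insert_of_mem (hsub ?_)
            simp only [Finset.mem_erase] at hb ⊢
            tauto
      · intro t htA htope
        have het : e ∉ t := fun h => heA (htA h)
        have h1 := ht t (htA.trans (Finset.subset_insert _ _)) (by
          intro X hX h
          refine htope _ ⟨X, hX, rfl⟩ ⟨(Finset.erase_subset _ _).trans h.1,
            Finset.disjoint_of_subset_left (Finset.erase_subset _ _) h.2⟩)
        have h2 := ht (insert e t) (Finset.insert_subset_insert _ htA) (by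
          intro X hX h
          refine htope _ ⟨X, hX, rfl⟩ ⟨Finset.subset_insert_iff.1 h.1 , ?_⟩
          exact Finset.disjoint_of_subset_left (Finset.erase_subset _ _)
            (Finset.disjoint_of_subset_right (Finset.subset_insert _ _) h.2))
        rw [Finset.sum_powerset_insert het, h1, zero_add] at h2
        exact h2
    -- deletion of `e`
    have hdel : ∀ S ⊆ A, c S = 0 := by
      refine ih {X ∈ 𝒱 | e ∉ X.1 ∪ X.2} ?_ ?_ ?_ c ?_ ?_
      · rintro X ⟨hX, heX⟩
        exact (Finset.subset_insert_iff_of_notMem heX).1 (hA X hX)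
      · exact fun X hX => hne X hX.1
      · rintro X ⟨hX, heX⟩ Y ⟨hY, heY⟩ hXY f hf
        obtain ⟨Z, hZ, h1, h2⟩ := hel X hX Y hY hXY f hf
        refine ⟨Z, ⟨hZ, ?_⟩, h1, h2⟩
        intro h
        have h1 := @h1 e
        have h2 := @h2 e
        simp only [Finset.mem_union, Finset.mem_erase] at *
        tauto
      · exact fun S hS hcS X hX => hc S (hS.trans (Finset.subset_insert _ _)) hcS X hX.1
      · intro t htA htope
        have het : e ∉ t := fun h => heA (htA h)
        have hsum : ∑ S ∈ t.powerset, c (insert e S) = 0 :=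
          Finset.sum_eq_zero fun S hS => hcon S ((Finset.mem_powerset.1 hS).trans htA)
        by_cases h1 : IsTope 𝒱 t
        · exact ht t (htA.trans (Finset.subset_insert _ _)) h1
        by_cases h2 : IsTope 𝒱 (insert e t)
        · have := ht _ (Finset.insert_subset_insert _ htA) h2
          rwa [Finset.sum_powerset_insert het, hsum, add_zero] at this
        -- both extensions of `t` contain a circuit; eliminating `e` gives one inside `t`
        exfalso
        unfold IsTope at h1 h2
        push Not at h1 h2
        obtain ⟨Y, hY, hY1, hY2⟩ := h1
        obtain ⟨X, hX, hX1, hX2⟩ := h2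
        have hX2' : Disjoint X.2 t ∧ e ∉ X.2 := by
          rw [Finset.disjoint_insert_right] at hX2; exact hX2.symm
        have heX : e ∈ X.1 := by
          by_contra h
          refine htope X ⟨hX, by simp [h, hX2'.2]⟩
            ⟨(Finset.subset_insert_iff_of_notMem h).1 hX1, hX2'.1⟩
        have heY1 : e ∉ Y.1 := fun h => het (hY1 h)
        have heY : e ∈ Y.2 := by
          by_contra h
          exact htope Y ⟨hY, by simp [h, heY1]⟩ ⟨hY1, hY2⟩
        by_cases hXY : X = (Y.2, Y.1)
        · refine hloop ⟨X, hX, ?_⟩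
          subst hXY
          have hY1e : Y.1 = ∅ := by
            rw [← Finset.disjoint_self_iff_empty]
            exact Finset.disjoint_of_subset_right hY1 hX2'.1
          ext a
          have := @hX1 a
          have h3 : a ∈ Y.2 → a ∉ t := fun h => Finset.disjoint_left.1 hY2 h
          simp only [hY1e, Finset.union_empty, Finset.mem_singleton, Finset.mem_insert] at *
          constructor
          · tauto
          · rintro rfl; exact heY
        · obtain ⟨Z, hZ, hZ1, hZ2⟩ := hel X hX Y hY hXY e (by simp [heX, heY])
          refine htope Z ⟨hZ, ?_⟩ ⟨?_, ?_⟩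
          · intro h
            rcases Finset.mem_union.1 h with h | h
            · simpa using hZ1 h
            · simpa using hZ2 h
          · intro a ha
            have h1 := hZ1 ha
            have h2 := @hX1 a
            have h3 := @hY1 a
            simp only [Finset.mem_union, Finset.mem_erase, Finset.mem_insert] at *
            tauto
          · refine Finset.disjoint_left.2 fun a ha hat => ?_
            have h1 := hZ2 ha
            have h2 := fun h => Finset.disjoint_left.1 hX2'.1 h hat
            have h3 := fun h => Finset.disjoint_left.1 hY2 h hat
            simp only [Finset.mem_union, Finset.mem_erase] at *
            tauto
    intro S hS
    by_cases h : e ∈ S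
    · have := hcon (S.erase e) (Finset.subset_insert_iff.1 hS)
      rwa [Finset.insert_erase h] at this
    · exact hdel S ((Finset.subset_insert_iff_of_notMem h).1 hS)

end NBC

/-! ### Polynomials of bounded degree and their leading forms -/

section Degree

open scoped Pointwise

variable (E) in
/-- The space of polynomials all of whose monomials have degree strictly less than `k`.
With `k = 0` this is the zero space, which is what `P⁻¹ = 0` requires. -/
noncomputable def ltDeg (k : ℕ) : Submodule ℚ (MvPolynomial E ℚ) :=
  restrictSupport ℚ {d | d.degree < k}

theorem mem_ltDeg {k : ℕ} {p : MvPolynomial E ℚ} :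
    p ∈ ltDeg E k ↔ ∀ d, coeff d p ≠ 0 → d.degree < k := by
  simp [ltDeg, mem_restrictSupport_iff, Set.subset_def]

theorem restrictTotalDegree_eq_ltDeg (k : ℕ) :
    restrictTotalDegree E ℚ k = ltDeg E (k + 1) := by
  unfold restrictTotalDegree ltDeg
  congr 1
  ext d
  rw [Set.mem_ofPred_eq, Set.mem_ofPred_eq, Nat.lt_succ_iff]
  rfl

theorem ltDeg_zero {p : MvPolynomial E ℚ} (hp : p ∈ ltDeg E 0) : p = 0 := by
  ext d
  by_contra h
  exact absurd (mem_ltDeg.1 hp d (by simpa using h)) (by simp)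

theorem ltDeg_mono {k l : ℕ} (h : k ≤ l) : ltDeg E k ≤ ltDeg E l :=
  fun _ hp => mem_ltDeg.2 fun d hd => (mem_ltDeg.1 hp d hd).trans_le h

theorem ltDeg_mul {a b c : ℕ} (h : a + b ≤ c + 1) {p q : MvPolynomial E ℚ}
    (hp : p ∈ ltDeg E a) (hq : q ∈ ltDeg E b) : p * q ∈ ltDeg E c := by
  have h1 : p * q ∈ restrictSupport ℚ
      ({d : E →₀ ℕ | d.degree < a} + {d : E →₀ ℕ | d.degree < b}) := by
    rw [restrictSupport_add]
    exact Submodule.mul_mem_mul hp hq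
  refine restrictSupport_mono _ ?_ h1
  rintro _ ⟨x, hx, y, hy, rfl⟩
  simp only [Set.mem_ofPred_eq, map_add] at *
  omega

theorem comp_ltDeg {k : ℕ} {p : MvPolynomial E ℚ} (hp : p ∈ ltDeg E k) :
    homogeneousComponent k p = 0 := by
  apply homogeneousComponent_eq_zero'
  intro d hd
  exact (mem_ltDeg.1 hp d (by simpa using hd)).ne

theorem homog_ltDeg {n k : ℕ} (h : n < k) {p : MvPolynomial E ℚ} (hp : p.IsHomogeneous n) :
    p ∈ ltDeg E k := by
  refine mem_ltDeg.2 fun d hd => ?_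
  by_contra h'
  exact hd (hp.coeff_eq_zero (by omega))

theorem sub_comp_ltDeg {k : ℕ} {p : MvPolynomial E ℚ} (hp : p ∈ ltDeg E (k + 1)) :
    p - homogeneousComponent k p ∈ ltDeg E k := by
  refine mem_ltDeg.2 fun d hd => ?_
  rw [coeff_sub, coeff_homogeneousComponent] at hd
  split_ifs at hd with h
  · simp at hd
  · have := mem_ltDeg.1 hp d (by simpa using hd)
    omega

theorem comp_mul {k l : ℕ} {p q : MvPolynomial E ℚ} (hp : p ∈ ltDeg E (k + 1))
    (hq : q ∈ ltDeg E (l + 1)) : homogeneousComponent (k + l) (p * q) =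
      homogeneousComponent k p * homogeneousComponent l q := by
  have h1 : (p - homogeneousComponent k p) * q ∈ ltDeg E (k + l) :=
    ltDeg_mul (by omega) (sub_comp_ltDeg hp) hq
  have h2 : homogeneousComponent k p * (q - homogeneousComponent l q) ∈ ltDeg E (k + l) :=
    ltDeg_mul (by omega) (homog_ltDeg (Nat.lt_succ_self k)
      (homogeneousComponent_isHomogeneous k p)) (sub_comp_ltDeg hq)
  have h3 : p * q = (p - homogeneousComponent k p) * q +
      homogeneousComponent k p * (q - homogeneousComponent l q) +
      homogeneousComponent k p * homogeneousComponent l q := by ring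
  rw [h3, map_add, map_add, comp_ltDeg h1, comp_ltDeg h2, zero_add, zero_add]
  exact homogeneousComponent_eq_self ((homogeneousComponent_isHomogeneous k p).mul
    (homogeneousComponent_isHomogeneous l q))

theorem comp_monomial_mul (u : E →₀ ℕ) (c : ℚ) (b : MvPolynomial E ℚ) (n : ℕ) :
    homogeneousComponent n (monomial u c * b) =
      if u.degree ≤ n then monomial u c * homogeneousComponent (n - u.degree) b else 0 := by
  ext d
  rw [coeff_homogeneousComponent, coeff_monomial_mul', apply_ite (coeff d), coeff_monomial_mul',
    coeff_homogeneousComponent, coeff_zero]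
  by_cases hud : u ≤ d
  · obtain ⟨v, rfl⟩ := exists_add_of_le hud
    simp only [hud, if_true, add_tsub_cancel_left, map_add]
    by_cases h1 : u.degree + v.degree = n
    · have h2 : u.degree ≤ n := by omega
      have h3 : v.degree = n - u.degree := by omega
      simp [h2, h3]
    · have h3 : u.degree ≤ n → v.degree ≠ n - u.degree := by omega
      by_cases h2 : u.degree ≤ n
      · simp [h1, h2, h3 h2]
      · simp [h1, h2]
  · simp [hud]

end Degree

/-! ### Lifting the relations of the Cordovil algebra -/

section Lift

/-- The squarefree monomial `∏_{a ∈ S} x_a`. -/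
noncomputable def sqf (S : Finset E) : MvPolynomial E ℚ := ∏ a ∈ S, X a

theorem sqf_homog (S : Finset E) : (sqf S).IsHomogeneous S.card := by
  have := IsHomogeneous.prod S (fun a => (X a : MvPolynomial E ℚ)) (fun _ => 1)
    (fun a _ => isHomogeneous_X ℚ a)
  simpa [sqf] using this

/-- The two leading terms of a product of shifted variables. -/
theorem prod_sub_expand (ε : E → ℚ) (S : Finset E) :
    ∏ a ∈ S, (X a - C (ε a)) - sqf S + ∑ a ∈ S, C (ε a) * sqf (S.erase a)
      ∈ ltDeg E (S.card - 1) := by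
  induction S using Finset.induction_on with
  | empty => simp [sqf]
  | insert b S hb ih =>
    rw [Finset.prod_insert hb, Finset.sum_insert hb, Finset.erase_insert hb,
      Finset.card_insert_of_notMem hb]
    have hs : ∑ a ∈ S, C (ε a) * sqf ((insert b S).erase a) =
        X b * ∑ a ∈ S, C (ε a) * sqf (S.erase a) := by
      rw [Finset.mul_sum]
      refine Finset.sum_congr rfl fun a ha => ?_
      have hne : b ≠ a := by rintro rfl; exact hb ha
      rw [Finset.erase_insert_of_ne hne, sqf, Finset.prod_insert (by simp [hb]), sqf]
      ring
    have hi : sqf (insert b S) = X b * sqf S := by rw [sqf, Finset.prod_insert hb, sqf]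
    rw [hs, hi]
    have hkey : (X b - C (ε b)) * ∏ a ∈ S, (X a - C (ε a)) - X b * sqf S +
        (C (ε b) * sqf S + X b * ∑ a ∈ S, C (ε a) * sqf (S.erase a)) =
        (X b - C (ε b)) * (∏ a ∈ S, (X a - C (ε a)) - sqf S +
          ∑ a ∈ S, C (ε a) * sqf (S.erase a)) +
        C (ε b) * ∑ a ∈ S, C (ε a) * sqf (S.erase a) := by ring
    rw [hkey]
    have hC : ∀ r : ℚ, (C r : MvPolynomial E ℚ) ∈ ltDeg E 1 := fun r =>
      homog_ltDeg Nat.zero_lt_one (isHomogeneous_C _ _)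
    rcases S.eq_empty_or_nonempty with rfl | hS
    · simp [sqf]
    have hpos := hS.card_pos
    refine add_mem (ltDeg_mul (a := 2) (b := S.card - 1) (by omega) (sub_mem ?_ ?_) ih)
      (ltDeg_mul (a := 1) (b := S.card) (by omega) (hC _) (sum_mem fun a ha =>
        ltDeg_mul (a := 1) (b := S.card) (by omega) (hC _) (homog_ltDeg ?_ (sqf_homog _))))
    · exact homog_ltDeg (by omega) (isHomogeneous_X _ _)
    · exact ltDeg_mono (by omega) (hC _)
    · rw [Finset.card_erase_of_mem ha]; omega

theorem tpartial_homog (Y : Finset E × Finset E) :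
    (tpartial Y).IsHomogeneous ((Y.1 ∪ Y.2).card - 1) := by
  refine IsHomogeneous.sum _ _ _ fun a ha => ?_
  rw [← Finset.card_erase_of_mem ha]
  have := sqf_homog ((Y.1 ∪ Y.2).erase a)
  split_ifs
  · simpa [sqf] using this
  · simpa [sqf] using this.neg

theorem circuit_prod_mem {𝒞 : Set (Finset E × Finset E)} {Y : Finset E × Finset E} (hY : Y ∈ 𝒞)
    (hd : Disjoint Y.1 Y.2) :
    ∏ a ∈ Y.1 ∪ Y.2, (X a - C (if a ∈ Y.2 then (1 : ℚ) else 0)) ∈ pIdeal 𝒞 := by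
  have h1 : ∏ a ∈ Y.1 ∪ Y.2, (X a - C (if a ∈ Y.2 then (1 : ℚ) else 0)) =
      (-1) ^ Y.2.card * ((∏ a ∈ Y.1, X a) * ∏ a ∈ Y.2, (1 - X a)) := by
    rw [Finset.prod_union hd, mul_left_comm]
    congr 1
    · refine Finset.prod_congr rfl fun a ha => ?_
      simp [Finset.disjoint_left.1 hd ha]
    · rw [← Finset.prod_const, ← Finset.prod_mul_distrib]
      refine Finset.prod_congr rfl fun a ha => ?_
      simp [ha]
  rw [h1]
  exact Ideal.mul_mem_left _ _ (Ideal.subset_span (Or.inr ⟨Y, hY, rfl⟩))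

/-- `∂̃(Y)` is the leading form of `±e_Y ± e_{-Y}`, where `e_Y` and `e_{-Y}` are the generators
of the ideal of `P(𝒞)` attached to the two opposite circuits: the terms of top degree cancel. -/
theorem tpartial_lift {𝒞 : Set (Finset E × Finset E)} {Y : Finset E × Finset E} (hY : Y ∈ 𝒞)
    (hY' : (Y.2, Y.1) ∈ 𝒞) (hd : Disjoint Y.1 Y.2) :
    ∃ r ∈ ltDeg E ((Y.1 ∪ Y.2).card - 1), tpartial Y + r ∈ pIdeal 𝒞 := by
  have h1 := circuit_prod_mem hY hd
  have h2 := circuit_prod_mem hY' hd.symm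
  have e1 := prod_sub_expand (fun a => if a ∈ Y.2 then (1 : ℚ) else 0) (Y.1 ∪ Y.2)
  have e2 := prod_sub_expand (fun a => if a ∈ Y.1 then (1 : ℚ) else 0) (Y.1 ∪ Y.2)
  simp only [Finset.union_comm Y.2 Y.1] at h2
  have ht : tpartial Y =
      ∑ a ∈ Y.1 ∪ Y.2, C (if a ∈ Y.1 then (1 : ℚ) else 0) * sqf ((Y.1 ∪ Y.2).erase a) -
      ∑ a ∈ Y.1 ∪ Y.2, C (if a ∈ Y.2 then (1 : ℚ) else 0) * sqf ((Y.1 ∪ Y.2).erase a) := by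
    rw [← Finset.sum_sub_distrib]
    refine Finset.sum_congr rfl fun a ha => ?_
    rw [← sub_mul, sqf]
    congr 1
    by_cases h : a ∈ Y.1
    · simp [h, Finset.disjoint_left.1 hd h]
    · have : a ∈ Y.2 := by simpa [h] using ha
      simp [h, this]
  refine ⟨_, sub_mem e1 e2, ?_⟩
  have := sub_mem h1 h2
  rw [ht]
  convert this using 1
  ring

/-- Each homogeneous component of an element
of `aIdeal 𝒞` is the leading form of an element of `pIdeal 𝒞`. -/
theorem aIdeal_lift {𝒞 : Set (Finset E × Finset E)} (hsigned : ∀ X ∈ 𝒞, Disjoint X.1 X.2)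
    (hopp : ∀ X : Finset E × Finset E, X ∈ 𝒞 ↔ (X.2, X.1) ∈ 𝒞)
    {j : MvPolynomial E ℚ} (hj : j ∈ aIdeal 𝒞) :
    ∀ k, ∃ r ∈ ltDeg E k, homogeneousComponent k j + r ∈ pIdeal 𝒞 := by
  -- it suffices to lift a homogeneous element in its own degree
  have hom : ∀ (n : ℕ) (g : MvPolynomial E ℚ), g.IsHomogeneous n →
      (∃ r ∈ ltDeg E n, g + r ∈ pIdeal 𝒞) →
      ∀ k, ∃ r ∈ ltDeg E k, homogeneousComponent k g + r ∈ pIdeal 𝒞 := by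
    intro n g hg hr k
    rw [homogeneousComponent_of_mem hg]
    split_ifs with h
    · rw [h]; exact hr
    · exact ⟨0, zero_mem _, by simp⟩
  refine Submodule.span_induction ?_ ?_ ?_ ?_ hj
  · rintro g (⟨a, rfl⟩ | ⟨Y, hY, -, rfl⟩)
    · refine hom 2 _ (isHomogeneous_X_pow a 2) ⟨-X a, neg_mem (homog_ltDeg (by omega)
        (isHomogeneous_X _ a)), ?_⟩
      exact Ideal.subset_span (Or.inl ⟨a, by ring⟩)
    · exact hom _ _ (tpartial_homog Y) (tpartial_lift hY ((hopp Y).1 hY) (hsigned Y hY))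
  · exact fun k => ⟨0, zero_mem _, by simp⟩
  · intro x y _ _ hx hy k
    obtain ⟨r, hr, hr'⟩ := hx k
    obtain ⟨s, hs, hs'⟩ := hy k
    refine ⟨r + s, add_mem hr hs, ?_⟩
    have := add_mem hr' hs'
    rw [map_add]
    convert this using 1
    ring
  · intro a x _ hx k
    rw [smul_eq_mul]
    induction a using MvPolynomial.induction_on' with
    | monomial u c =>
      have hu : (monomial u c).IsHomogeneous u.degree := isHomogeneous_monomial c rfl
      rw [comp_monomial_mul]
      split_ifs with h
      · obtain ⟨r, hr, hr'⟩ := hx (k - u.degree)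
        refine ⟨monomial u c * r, ltDeg_mul (by omega)
          (homog_ltDeg (Nat.lt_succ_self _) hu) hr, ?_⟩
        rw [← mul_add]
        exact Ideal.mul_mem_left _ _ hr'
      · exact ⟨0, zero_mem _, by simp⟩
    | add p q hp hq =>
      obtain ⟨r, hr, hr'⟩ := hp
      obtain ⟨s, hs, hs'⟩ := hq
      refine ⟨r + s, add_mem hr hs, ?_⟩
      have := add_mem hr' hs'
      rw [add_mul, map_add]
      convert this using 1
      ring

end Lift

/-! ### NBC monomials span -/

section Span

/-- The span of the NBC monomials. -/
noncomputable def nbcSpan (𝒞 : Set (Finset E × Finset E)) : Submodule ℚ (MvPolynomial E ℚ) :=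
  Submodule.span ℚ (sqf '' {S | IsNBC 𝒞 S})

/-- The polynomials congruent modulo `aIdeal 𝒞` to a combination of NBC monomials of
degree `k`. -/
noncomputable def nbcMod (𝒞 : Set (Finset E × Finset E)) (k : ℕ) :
    Submodule ℚ (MvPolynomial E ℚ) :=
  (nbcSpan 𝒞 ⊓ homogeneousSubmodule E ℚ k) ⊔ (aIdeal 𝒞).restrictScalars ℚ

theorem mem_nbcMod_of_mem {𝒞 : Set (Finset E × Finset E)} {k : ℕ} {p : MvPolynomial E ℚ}
    (h : p ∈ aIdeal 𝒞) : p ∈ nbcMod 𝒞 k :=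
  Submodule.mem_sup_right h

theorem sq_dvd_mem {𝒞 : Set (Finset E × Finset E)} {a : E} {p : MvPolynomial E ℚ}
    (h : X a ^ 2 ∣ p) : p ∈ aIdeal 𝒞 :=
  Ideal.mem_of_dvd _ h (Ideal.subset_span (Or.inl ⟨a, rfl⟩))

/-- Straightening: a squarefree monomial containing a broken circuit `U ∖ {m}` is rewritten by
the relation `∂̃` into monomials in which some `a ∈ U` is replaced by `m < a`. The sum of the
ranks of the elements decreases, so that the process ends in NBC monomials. -/
theorem sqf_mem_nbcMod {𝒞 : Set (Finset E × Finset E)}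
    (hopp : ∀ X : Finset E × Finset E, X ∈ 𝒞 ↔ (X.2, X.1) ∈ 𝒞) :
    ∀ (N : ℕ) (S : Finset E), ∑ a ∈ S, (Finset.univ.filter (· < a)).card = N →
      sqf S ∈ nbcMod 𝒞 S.card := by
  intro N
  induction N using Nat.strong_induction_on with
  | _ N ih =>
  intro S hSN
  by_cases hS : IsNBC 𝒞 S
  · exact Submodule.mem_sup_left ⟨Submodule.subset_span ⟨S, hS, rfl⟩, sqf_homog S⟩
  unfold IsNBC at hS
  push Not at hS
  obtain ⟨Y, hY, m, hm, hmin, hsub⟩ : ∃ Y ∈ 𝒞, ∃ m ∈ Y.1, (∀ b ∈ Y.1 ∪ Y.2, m ≤ b) ∧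
      (Y.1 ∪ Y.2).erase m ⊆ S := by
    obtain ⟨Y, hY, m, hm, hmin, hsub⟩ := hS
    rcases Finset.mem_union.1 hm with h | h
    · exact ⟨Y, hY, m, h, hmin, hsub⟩
    · refine ⟨(Y.2, Y.1), (hopp Y).1 hY, m, h, ?_, ?_⟩
      · simpa only [Finset.union_comm Y.2 Y.1] using hmin
      · simpa only [Finset.union_comm Y.2 Y.1] using hsub
  have hmU : m ∈ Y.1 ∪ Y.2 := Finset.mem_union_left _ hm
  have hrel : tpartial Y ∈ aIdeal 𝒞 := by
    refine Ideal.subset_span (Or.inr ⟨Y, hY, ⟨⟨m, hmU⟩, ?_⟩, rfl⟩)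
    have : (Y.1 ∪ Y.2).min' ⟨m, hmU⟩ = m :=
      le_antisymm (Finset.min'_le _ _ hmU) (hmin _ (Finset.min'_mem _ _))
    rwa [this]
  generalize hU : Y.1 ∪ Y.2 = U at *
  have hexp : tpartial Y = sqf (U.erase m) +
      ∑ a ∈ U.erase m, C (if a ∈ Y.1 then (1 : ℚ) else -1) * sqf (U.erase a) := by
    rw [tpartial, hU, ← Finset.add_sum_erase _ _ hmU]
    simp only [hm, if_true, one_mul, sqf]
    congr 1
    refine Finset.sum_congr rfl fun a _ => ?_
    split_ifs <;> simp
  have hSR : sqf S = sqf (S \ U.erase m) * sqf (U.erase m) := by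
    rw [sqf, sqf, sqf, Finset.prod_sdiff hsub]
  have hfin : sqf S = sqf (S \ U.erase m) * tpartial Y -
      ∑ a ∈ U.erase m, (if a ∈ Y.1 then (1 : ℚ) else -1) •
        (sqf (S \ U.erase m) * sqf (U.erase a)) := by
    rw [hSR, hexp, mul_add, Finset.mul_sum, eq_sub_iff_add_eq]
    congr 1
    refine Finset.sum_congr rfl fun a _ => ?_
    rw [smul_eq_C_mul]
    ring
  rw [hfin]
  refine sub_mem (mem_nbcMod_of_mem (Ideal.mul_mem_left _ _ hrel))
    (sum_mem fun a ha => Submodule.smul_mem _ _ ?_)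
  obtain ⟨ham, haU⟩ := Finset.mem_erase.1 ha
  have haS : a ∈ S := hsub ha
  have hma : m < a := lt_of_le_of_ne (hmin a haU) (Ne.symm ham)
  by_cases hmS : m ∈ S
  · refine mem_nbcMod_of_mem (sq_dvd_mem (a := m) ?_)
    rw [pow_two]
    exact mul_dvd_mul (Finset.dvd_prod_of_mem _ (by simp [hmS]))
      (Finset.dvd_prod_of_mem _ (by simp [hmU, Ne.symm ham]))
  · have hdis : Disjoint (S \ U.erase m) (U.erase a) := by
      rw [Finset.disjoint_left]
      intro b hb
      simp only [Finset.mem_sdiff, Finset.mem_erase] at *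
      rintro ⟨_, hbU⟩
      refine hb.2 ⟨?_, hbU⟩
      rintro rfl
      exact hmS hb.1
    have hset : (S \ U.erase m) ∪ U.erase a = insert m (S.erase a) := by
      ext b
      have := @hsub b
      simp only [Finset.mem_sdiff, Finset.mem_erase, Finset.mem_union, Finset.mem_insert] at *
      by_cases h1 : b = m
      · subst h1; simp [hmU, Ne.symm ham]
      · by_cases h2 : b = a
        · subst h2; simp [ham, haU]
        · simp only [h1]; tauto
    have hmS' : m ∉ S.erase a := fun h => hmS (Finset.mem_of_mem_erase h)
    have hprod : sqf (S \ U.erase m) * sqf (U.erase a) = sqf (insert m (S.erase a)) := by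
      rw [← hset, sqf, sqf, sqf, Finset.prod_union hdis]
    have hc : (insert m (S.erase a)).card = S.card := by
      rw [Finset.card_insert_of_notMem hmS', Finset.card_erase_add_one haS]
    rw [hprod, ← hc]
    refine ih _ ?_ _ rfl
    rw [← hSN, Finset.sum_insert hmS', ← Finset.add_sum_erase _ _ haS]
    refine Nat.add_lt_add_right (Finset.card_lt_card ?_) _
    rw [Finset.ssubset_iff_of_subset]
    · exact ⟨m, by simp [hma], by simp⟩
    · intro b hb
      simp only [Finset.mem_filter, Finset.mem_univ, true_and] at *
      exact hb.trans hma

theorem homog_mem_nbcMod {𝒞 : Set (Finset E × Finset E)}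
    (hopp : ∀ X : Finset E × Finset E, X ∈ 𝒞 ↔ (X.2, X.1) ∈ 𝒞) {k : ℕ}
    {q : MvPolynomial E ℚ} (hq : q.IsHomogeneous k) : q ∈ nbcMod 𝒞 k := by
  rw [q.as_sum]
  refine sum_mem fun d hd => ?_
  have hdk : d.degree = k := by
    by_contra h
    exact (mem_support_iff.1 hd) (hq.coeff_eq_zero h)
  have hmon : monomial d (coeff d q) = coeff d q • ∏ a ∈ d.support, X a ^ d a := by
    rw [monomial_eq, smul_eq_C_mul, Finsupp.prod]
  rw [hmon]
  refine Submodule.smul_mem _ _ ?_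
  by_cases h : ∀ a ∈ d.support, d a = 1
  · have h1 : ∏ a ∈ d.support, (X a : MvPolynomial E ℚ) ^ d a = sqf d.support :=
      Finset.prod_congr rfl fun a ha => by rw [h a ha, pow_one]
    have h2 : d.support.card = k := by
      rw [← hdk, Finsupp.degree_apply, Finset.card_eq_sum_ones]
      exact Finset.sum_congr rfl fun a ha => (h a ha).symm
    rw [h1, ← h2]
    exact sqf_mem_nbcMod hopp _ _ rfl
  · push Not at h
    obtain ⟨a, ha, h1⟩ := h
    have h0 := Finsupp.mem_support_iff.1 ha
    exact mem_nbcMod_of_mem (sq_dvd_mem (a := a) ((pow_dvd_pow _ (by omega)).trans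
      (Finset.dvd_prod_of_mem (fun a => (X a : MvPolynomial E ℚ) ^ d a) ha)))

theorem homog_reduce {𝒞 : Set (Finset E × Finset E)}
    (hopp : ∀ X : Finset E × Finset E, X ∈ 𝒞 ↔ (X.2, X.1) ∈ 𝒞) {k : ℕ}
    {q : MvPolynomial E ℚ} (hq : q.IsHomogeneous k) :
    ∃ n ∈ nbcSpan 𝒞, n.IsHomogeneous k ∧ q - n ∈ aIdeal 𝒞 := by
  obtain ⟨n, hn, j, hj, h⟩ := Submodule.mem_sup.1 (homog_mem_nbcMod hopp hq)
  refine ⟨n, hn.1, hn.2, ?_⟩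
  rw [← h, add_sub_cancel_left]
  exact hj

/-- A homogeneous element of `aIdeal 𝒞` is the leading form of an element of `pIdeal 𝒞`. -/
theorem homog_aIdeal_lift {𝒞 : Set (Finset E × Finset E)}
    (hsigned : ∀ X ∈ 𝒞, Disjoint X.1 X.2)
    (hopp : ∀ X : Finset E × Finset E, X ∈ 𝒞 ↔ (X.2, X.1) ∈ 𝒞) {k : ℕ}
    {j : MvPolynomial E ℚ} (hj : j ∈ aIdeal 𝒞) (hk : j.IsHomogeneous k) :
    ∃ r ∈ ltDeg E k, j + r ∈ pIdeal 𝒞 := by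
  simpa only [homogeneousComponent_eq_self hk] using aIdeal_lift hsigned hopp hj k

/-- Modulo `pIdeal 𝒞` every polynomial of degree less than `k` is a combination of NBC monomials
of degree less than `k`. -/
theorem reduce_pIdeal {𝒞 : Set (Finset E × Finset E)}
    (hsigned : ∀ X ∈ 𝒞, Disjoint X.1 X.2)
    (hopp : ∀ X : Finset E × Finset E, X ∈ 𝒞 ↔ (X.2, X.1) ∈ 𝒞) (k : ℕ) :
    ∀ p ∈ ltDeg E k, ∃ n ∈ nbcSpan 𝒞, n ∈ ltDeg E k ∧ p - n ∈ pIdeal 𝒞 := by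
  induction k with
  | zero =>
    intro p hp
    exact ⟨0, zero_mem _, zero_mem _, by simp [ltDeg_zero hp]⟩
  | succ k ih =>
    intro p hp
    have hh := homogeneousComponent_isHomogeneous k p
    obtain ⟨n, hn, hnk, hj⟩ := homog_reduce hopp hh
    obtain ⟨r, hr, hjr⟩ := homog_aIdeal_lift hsigned hopp hj (hh.sub hnk)
    obtain ⟨n', hn', hnk', hI⟩ := ih _ (sub_mem (sub_comp_ltDeg hp) hr)
    refine ⟨n + n', add_mem hn hn', add_mem (homog_ltDeg (Nat.lt_succ_self k) hnk)
      (ltDeg_mono (Nat.le_succ k) hnk'), ?_⟩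
    convert add_mem hjr hI using 1
    ring

end Span

/-! ### Independence in the quotient, and the isomorphism -/

section Main

/-- Evaluation at the point of `{0,1}^E` with positive part `t`. -/
noncomputable def evalAt (t : Finset E) : MvPolynomial E ℚ →+* ℚ :=
  eval fun a => if a ∈ t then 1 else 0

theorem evalAt_sqf (t S : Finset E) : evalAt t (sqf S) = if S ⊆ t then 1 else 0 := by
  simp only [evalAt, sqf, map_prod, eval_X]
  rw [Finset.prod_ite_zero]
  simp [Finset.subset_iff]

theorem evalAt_pIdeal {𝒞 : Set (Finset E × Finset E)} {t : Finset E} (ht : IsTope 𝒞 t)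
    {p : MvPolynomial E ℚ} (hp : p ∈ pIdeal 𝒞) : evalAt t p = 0 := by
  have : pIdeal 𝒞 ≤ RingHom.ker (evalAt t) := by
    refine Ideal.span_le.2 ?_
    rintro g (⟨a, rfl⟩ | ⟨Y, hY, rfl⟩)
    · simp only [SetLike.mem_coe, RingHom.mem_ker, evalAt, map_sub, map_pow, eval_X]
      split_ifs <;> norm_num
    · rw [SetLike.mem_coe, RingHom.mem_ker]
      by_contra h
      simp only [evalAt, map_mul, map_prod, map_sub, map_one, eval_X, mul_eq_zero,
        Finset.prod_eq_zero_iff, not_or, not_exists, not_and] at h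
      refine ht Y hY ⟨fun a ha => ?_, Finset.disjoint_left.2 fun a ha hat => ?_⟩
      · by_contra hat
        exact h.1 a ha (by simp [hat])
      · exact h.2 a ha (by simp [hat])
  exact this hp

/-- The NBC monomials are linearly independent in `P(𝒞)`. -/
theorem nbcSpan_inf_pIdeal {𝒞 : Set (Finset E × Finset E)}
    (hcard : ∀ X ∈ 𝒞, 1 < (X.1 ∪ X.2).card)
    (helim : ∀ X ∈ 𝒞, ∀ Y ∈ 𝒞, X ≠ (Y.2, Y.1) → ∀ e ∈ X.1 ∩ Y.2,
      ∃ Z ∈ 𝒞, Z.1 ⊆ (X.1 ∪ Y.1).erase e ∧ Z.2 ⊆ (X.2 ∪ Y.2).erase e)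
    {p : MvPolynomial E ℚ} (hp : p ∈ nbcSpan 𝒞) (hI : p ∈ pIdeal 𝒞) : p = 0 := by
  rw [nbcSpan, Finsupp.mem_span_image_iff_linearCombination] at hp
  obtain ⟨l, hl, rfl⟩ := hp
  have h0 : ∀ S ⊆ (Finset.univ : Finset E), l S = 0 := by
    refine nbc_indep Finset.univ 𝒞 (fun _ _ => Finset.subset_univ _)
      (fun Y hY => Finset.card_pos.1 (by have := hcard Y hY; omega)) helim l ?_ ?_
    · intro S _ hS
      exact hl (Finsupp.mem_support_iff.2 hS)
    · intro t _ ht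
      have h1 := evalAt_pIdeal ht hI
      rw [Finsupp.linearCombination_apply, Finsupp.sum_fintype _ _ (by simp), map_sum] at h1
      simp only [smul_eq_C_mul, map_mul, evalAt_sqf] at h1
      rw [← h1]
      have h2 : ∀ S, evalAt t (C (l S)) = l S := fun S => by simp [evalAt]
      simp only [h2, mul_ite, mul_one, mul_zero]
      rw [← Finset.sum_filter]
      refine Finset.sum_congr ?_ fun _ _ => rfl
      ext S
      simp
  have : l = 0 := by
    ext S
    exact h0 S (Finset.subset_univ _)
  simp [this]

/-- The leading forms of elements of `pIdeal 𝒞` lie in `aIdeal 𝒞`. -/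
theorem leading_mem_aIdeal {𝒞 : Set (Finset E × Finset E)}
    (hsigned : ∀ X ∈ 𝒞, Disjoint X.1 X.2)
    (hcard : ∀ X ∈ 𝒞, 1 < (X.1 ∪ X.2).card)
    (hopp : ∀ X : Finset E × Finset E, X ∈ 𝒞 ↔ (X.2, X.1) ∈ 𝒞)
    (helim : ∀ X ∈ 𝒞, ∀ Y ∈ 𝒞, X ≠ (Y.2, Y.1) → ∀ e ∈ X.1 ∩ Y.2,
      ∃ Z ∈ 𝒞, Z.1 ⊆ (X.1 ∪ Y.1).erase e ∧ Z.2 ⊆ (X.2 ∪ Y.2).erase e)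
    {k : ℕ} {p : MvPolynomial E ℚ} (hp : p ∈ ltDeg E (k + 1)) (hI : p ∈ pIdeal 𝒞) :
    homogeneousComponent k p ∈ aIdeal 𝒞 := by
  have hh := homogeneousComponent_isHomogeneous k p
  obtain ⟨n, hn, hnk, hj⟩ := homog_reduce hopp hh
  obtain ⟨r, hr, hjr⟩ := homog_aIdeal_lift hsigned hopp hj (hh.sub hnk)
  obtain ⟨n', hn', hnk', hI'⟩ := reduce_pIdeal hsigned hopp k _ (sub_mem (sub_comp_ltDeg hp) hr)
  have hz : n + n' = 0 := by
    refine nbcSpan_inf_pIdeal hcard helim (add_mem hn hn') ?_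
    convert sub_mem hI (add_mem hjr hI') using 1
    ring
  have hn0 : n = 0 := by
    have := congrArg (homogeneousComponent k) hz
    rwa [map_add, map_zero, comp_ltDeg hnk', add_zero, homogeneousComponent_eq_self hnk] at this
  simpa [hn0] using hj

theorem exists_equiv_of_ker_eq {A B D : Type*} [AddCommGroup A] [AddCommGroup B]
    [AddCommGroup D] [Module ℚ A] [Module ℚ B] [Module ℚ D] (g : A →ₗ[ℚ] B) (φ : A →ₗ[ℚ] D)
    (hg : Function.Surjective g) (hφ : Function.Surjective φ)
    (h : LinearMap.ker g = LinearMap.ker φ) :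
    ∃ f : B ≃ₗ[ℚ] D, ∀ a, f (g a) = φ a := by
  refine ⟨(g.quotKerEquivOfSurjective hg).symm ≪≫ₗ Submodule.quotEquivOfEq _ _ h ≪≫ₗ
    φ.quotKerEquivOfSurjective hφ, fun a => ?_⟩
  have : (g.quotKerEquivOfSurjective hg).symm (g a) = Submodule.Quotient.mk a := by
    rw [LinearEquiv.symm_apply_eq]
    simp
  simp [this]

/-- `Pᵏ⁻¹` is the image of the polynomials of degree less than `k`. -/
theorem pPrev_eq (𝒞 : Set (Finset E × Finset E)) (k : ℕ) :
    pPrev 𝒞 k = (ltDeg E k).map (Ideal.Quotient.mkₐ ℚ (pIdeal 𝒞)).toLinearMap := by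
  cases k with
  | zero =>
    have : ltDeg E 0 = ⊥ := (Submodule.eq_bot_iff _).2 fun _ => ltDeg_zero
    rw [this, Submodule.map_bot, pPrev]
  | succ k => rw [pPrev, pFil, restrictTotalDegree_eq_ltDeg]

/-- Taking the class in `𝔸(𝒞)ₖ` of the leading form factors through `Pᵏ/Pᵏ⁻¹` and is
an isomorphism there. -/
theorem exists_graded_equiv {𝒞 : Set (Finset E × Finset E)}
    (hsigned : ∀ X ∈ 𝒞, Disjoint X.1 X.2)
    (hcard : ∀ X ∈ 𝒞, 1 < (X.1 ∪ X.2).card)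
    (hopp : ∀ X : Finset E × Finset E, X ∈ 𝒞 ↔ (X.2, X.1) ∈ 𝒞)
    (helim : ∀ X ∈ 𝒞, ∀ Y ∈ 𝒞, X ≠ (Y.2, Y.1) → ∀ e ∈ X.1 ∩ Y.2,
      ∃ Z ∈ 𝒞, Z.1 ⊆ (X.1 ∪ Y.1).erase e ∧ Z.2 ⊆ (X.2 ∪ Y.2).erase e) (k : ℕ) :
    ∃ f : pGr 𝒞 k ≃ₗ[ℚ] ↥(aGrade 𝒞 k), ∀ (p : MvPolynomial E ℚ) (a : ↥(pFil 𝒞 k)),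
      p ∈ ltDeg E (k + 1) → (a : PAlg 𝒞) = Ideal.Quotient.mk (pIdeal 𝒞) p →
      ((f (Submodule.Quotient.mk a) : ↥(aGrade 𝒞 k)) : AAlg 𝒞) =
        Ideal.Quotient.mk (aIdeal 𝒞) (homogeneousComponent k p) := by
  let π : ↥(restrictTotalDegree E ℚ k) →ₗ[ℚ] ↥(pFil 𝒞 k) :=
    ((Ideal.Quotient.mkₐ ℚ (pIdeal 𝒞)).toLinearMap.domRestrict _).codRestrict (pFil 𝒞 k)
      fun p => Submodule.mem_map_of_mem p.2
  let φ : ↥(restrictTotalDegree E ℚ k) →ₗ[ℚ] ↥(aGrade 𝒞 k) :=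
    (((Ideal.Quotient.mkₐ ℚ (aIdeal 𝒞)).toLinearMap ∘ₗ
      homogeneousComponent k).domRestrict _).codRestrict (aGrade 𝒞 k)
      fun p => Submodule.mem_map_of_mem (homogeneousComponent_mem k _)
  have hπ : ∀ p, (π p : PAlg 𝒞) = Ideal.Quotient.mk (pIdeal 𝒞) p := fun _ => rfl
  have hφ : ∀ p, (φ p : AAlg 𝒞) = Ideal.Quotient.mk (aIdeal 𝒞)
    (homogeneousComponent k (p : MvPolynomial E ℚ)) := fun _ => rfl
  have hdeg : ∀ p : ↥(restrictTotalDegree E ℚ k), (p : MvPolynomial E ℚ) ∈ ltDeg E (k + 1) :=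
    fun p => by rw [← restrictTotalDegree_eq_ltDeg]; exact p.2
  have hπs : Function.Surjective π := by
    rintro ⟨_, p, hp, rfl⟩
    exact ⟨⟨p, hp⟩, rfl⟩
  have hφs : Function.Surjective φ := by
    rintro ⟨_, p, hp, rfl⟩
    have hp' : p.IsHomogeneous k := hp
    refine ⟨⟨p, ?_⟩, Subtype.ext ?_⟩
    · rw [restrictTotalDegree_eq_ltDeg]; exact homog_ltDeg (Nat.lt_succ_self k) hp'
    · rw [hφ, homogeneousComponent_eq_self hp']; rfl
  have hker : LinearMap.ker ((Submodule.mkQ (Submodule.comap (pFil 𝒞 k).subtype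
      (pPrev 𝒞 k))) ∘ₗ π) = LinearMap.ker φ := by
    ext p
    have h1 : p ∈ LinearMap.ker φ ↔
        homogeneousComponent k (p : MvPolynomial E ℚ) ∈ aIdeal 𝒞 := by
      rw [LinearMap.mem_ker, ← Submodule.coe_eq_zero, hφ, Ideal.Quotient.eq_zero_iff_mem]
    have h2 : p ∈ LinearMap.ker ((Submodule.mkQ (Submodule.comap (pFil 𝒞 k).subtype
        (pPrev 𝒞 k))) ∘ₗ π) ↔ ∃ q ∈ ltDeg E k, (p : MvPolynomial E ℚ) - q ∈ pIdeal 𝒞 := by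
      rw [LinearMap.mem_ker, LinearMap.comp_apply, Submodule.mkQ_apply,
        Submodule.Quotient.mk_eq_zero, Submodule.mem_comap, Submodule.subtype_apply, hπ,
        pPrev_eq, Submodule.mem_map]
      refine exists_congr fun q => and_congr_right fun _ => ?_
      rw [eq_comm, ← Ideal.Quotient.eq]
      rfl
    rw [h1, h2]
    constructor
    · rintro ⟨q, hq, hI⟩
      have := leading_mem_aIdeal hsigned hcard hopp helim
        (sub_mem (hdeg p) (ltDeg_mono (Nat.le_succ k) hq)) hI
      rwa [map_sub, comp_ltDeg hq, sub_zero] at this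
    · intro h
      obtain ⟨r, hr, hI⟩ := homog_aIdeal_lift hsigned hopp h
        (homogeneousComponent_isHomogeneous k _)
      refine ⟨_, sub_mem (sub_comp_ltDeg (hdeg p)) hr, ?_⟩
      convert hI using 1
      ring
  obtain ⟨f, hf⟩ := exists_equiv_of_ker_eq _ φ
    ((Submodule.mkQ_surjective _).comp hπs) hφs hker
  refine ⟨f, fun p a hp ha => ?_⟩
  have hp' : p ∈ restrictTotalDegree E ℚ k := by rwa [restrictTotalDegree_eq_ltDeg]
  have haπ : a = π ⟨p, hp'⟩ := Subtype.ext ha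
  have := hf ⟨p, hp'⟩
  rw [haπ]
  exact (congrArg Subtype.val this).trans (hφ _)

end Main

/-- If `𝒞` is the set of signed circuits of a loop-free oriented
matroid on `E`, then the associated graded algebra of the degree filtration on `P(𝒞)`
is isomorphic as a graded `ℚ`-algebra to `𝔸(𝒞)`: there are linear equivalences
`f k : Pᵏ/Pᵏ⁻¹ ≃ 𝔸(𝒞)ₖ` sending the class of `1` to `1` and compatible with
multiplication. -/
theorem pAlg_associated_graded (𝒞 : Set (Finset E × Finset E))
    (hsigned : ∀ X ∈ 𝒞, Disjoint X.1 X.2)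
    (hcard : ∀ X ∈ 𝒞, 1 < (X.1 ∪ X.2).card)
    (hopp : ∀ X : Finset E × Finset E, X ∈ 𝒞 ↔ (X.2, X.1) ∈ 𝒞)
    (hmin : ∀ X ∈ 𝒞, ∀ Y ∈ 𝒞, X.1 ∪ X.2 ⊆ Y.1 ∪ Y.2 → X = Y ∨ X = (Y.2, Y.1))
    (helim : ∀ X ∈ 𝒞, ∀ Y ∈ 𝒞, X ≠ (Y.2, Y.1) → ∀ e ∈ X.1 ∩ Y.2,
      ∃ Z ∈ 𝒞, Z.1 ⊆ (X.1 ∪ Y.1).erase e ∧ Z.2 ⊆ (X.2 ∪ Y.2).erase e) :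
    ∃ f : ∀ k : ℕ, pGr 𝒞 k ≃ₗ[ℚ] ↥(aGrade 𝒞 k),
      (∀ a : ↥(pFil 𝒞 0), (a : PAlg 𝒞) = 1 →
        ((f 0 (Submodule.Quotient.mk a) : ↥(aGrade 𝒞 0)) : AAlg 𝒞) = 1) ∧
      (∀ (k l : ℕ) (a : ↥(pFil 𝒞 k)) (b : ↥(pFil 𝒞 l)) (c : ↥(pFil 𝒞 (k + l))),
        (c : PAlg 𝒞) = (a : PAlg 𝒞) * (b : PAlg 𝒞) →
        ((f (k + l) (Submodule.Quotient.mk c) : ↥(aGrade 𝒞 (k + l))) : AAlg 𝒞) =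
          ((f k (Submodule.Quotient.mk a) : ↥(aGrade 𝒞 k)) : AAlg 𝒞) *
            ((f l (Submodule.Quotient.mk b) : ↥(aGrade 𝒞 l)) : AAlg 𝒞)) := by
  choose f hf using fun k => exists_graded_equiv hsigned hcard hopp helim k
  refine ⟨f, ?_, ?_⟩
  · intro a ha
    rw [hf 0 1 a (homog_ltDeg Nat.zero_lt_one (isHomogeneous_one E ℚ)) (by rw [ha, map_one]),
      homogeneousComponent_eq_self (isHomogeneous_one E ℚ), map_one]
  · intro k l a b c hc
    have hrep : ∀ (m : ℕ) (x : ↥(pFil 𝒞 m)), ∃ p ∈ ltDeg E (m + 1),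
        (x : PAlg 𝒞) = Ideal.Quotient.mk (pIdeal 𝒞) p := by
      rintro m ⟨_, p, hp, rfl⟩
      exact ⟨p, by rw [← restrictTotalDegree_eq_ltDeg]; exact hp, rfl⟩
    obtain ⟨p, hp, ha⟩ := hrep k a
    obtain ⟨q, hq, hb⟩ := hrep l b
    rw [hf k p a hp ha, hf l q b hq hb, hf (k + l) (p * q) c (ltDeg_mul (by omega) hp hq)
      (by rw [hc, ha, hb, map_mul]), comp_mul hp hq, map_mul]
end

section
/- For each unit complex number z = a + bi (a² + b² = 1), let z act on V × V × V by z·(v₁, v₂, v₃) = (v₁, a·v₂ − b·v₃, b·v₂ + a·v₃). This defines an action of the circle group on V × V × V, the subset M₃(𝒜) is invariant under this action, and the set of points of M₃(𝒜) fixed by every element of the circle is exactly {(v, 0, 0) : v ∈ M₁(𝒜)}. -/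
/-!
The element `z = a + bi` acts on the last two coordinates by the rotation matrix `(a, -b; b, a)`,
which is multiplicative in `z`. Linear forms commute with this matrix, so `(ω̄ᵢ v₂, ω̄ᵢ v₃)` is
rotated in the same way; since rotations by unit `z` are invertible, the pair vanishes after the
action only if it vanished before, whence `M₃(𝒜)` is invariant. A point fixed by `z = -1` has
`v₂ = v₃ = 0`, and `(v, 0, 0)` lies in `M₃(𝒜)` exactly when `v` lies in `M₁(𝒜)`.
-/

/-!
Statement 14: the circle action on `M₃(𝒜)` by rotation in the last two coordinates,
and its fixed-point set `M₁(𝒜)`.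
-/

open Set

variable {V : Type*} [NormedAddCommGroup V] [NormedSpace ℝ V] [FiniteDimensional ℝ V]
variable {n : ℕ}

/-- The complement `M₃(𝒜) ⊆ V × V × V`: the set of `(v₁,v₂,v₃)` such that for every
`i`, `ω_{i,3}(v₁,v₂,v₃) = (ωᵢ v₁, ω̄ᵢ v₂, ω̄ᵢ v₃) ≠ (0,0,0)`. -/
def M₃ (ω : Fin n → V →ᵃ[ℝ] ℝ) : Set (V × V × V) :=
  {p | ∀ i, ¬(ω i p.1 = 0 ∧ (ω i).linear p.2.1 = 0 ∧ (ω i).linear p.2.2 = 0)}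

/-- The action of the unit complex number `z = a + bi` on `V × V × V`:
`z·(v₁,v₂,v₃) = (v₁, a·v₂ - b·v₃, b·v₂ + a·v₃)`. -/
def circleAct (z : ℂ) (p : V × V × V) : V × V × V :=
  (p.1, z.re • p.2.1 - z.im • p.2.2, z.im • p.2.1 + z.re • p.2.2)

/-- The maps `circleAct z` for unit `z` define an action of the
circle group on `V × V × V`, `M₃(𝒜)` is invariant, and the fixed-point set of the
circle on `M₃(𝒜)` is exactly `{(v,0,0) : v ∈ M₁(𝒜)}`. -/
theorem circle_action_on_M₃ (ω : Fin n → V →ᵃ[ℝ] ℝ) (hω : ∀ i, (ω i).linear ≠ 0) :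
    circleAct (V := V) 1 = id ∧
    (∀ z w : ℂ, z.re ^ 2 + z.im ^ 2 = 1 → w.re ^ 2 + w.im ^ 2 = 1 →
      circleAct (V := V) (z * w) = circleAct z ∘ circleAct w) ∧
    (∀ z : ℂ, z.re ^ 2 + z.im ^ 2 = 1 → ∀ p ∈ M₃ ω, circleAct z p ∈ M₃ ω) ∧
    {p ∈ M₃ ω | ∀ z : ℂ, z.re ^ 2 + z.im ^ 2 = 1 → circleAct z p = p} =
      {p : V × V × V | p.1 ∈ M₁ ω ∧ p.2.1 = 0 ∧ p.2.2 = 0} := by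
  refine ⟨?_, ?_, ?_, ?_⟩
  · funext p
    simp [circleAct]
  · intro z w _ _
    funext p
    simp only [circleAct, Function.comp_apply, Complex.mul_re, Complex.mul_im, Prod.mk.injEq,
      true_and]
    constructor <;> module
  · intro z hz p hp i
    rintro ⟨h1, h2, h3⟩
    simp only [circleAct, map_sub, map_add, map_smul, smul_eq_mul] at h1 h2 h3
    -- The inverse rotation, by the conjugate of `z`, recovers the two linear coordinates.
    refine hp i ⟨h1, ?_, ?_⟩
    · linear_combination z.re * h2 + z.im * h3 - (ω i).linear p.2.1 * hz
    · linear_combination z.re * h3 - z.im * h2 - (ω i).linear p.2.2 * hz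
  · ext ⟨v₁, v₂, v₃⟩
    constructor
    · rintro ⟨hp, hfix⟩
      -- Already `z = -1` forces `v₂ = -v₂` and `v₃ = -v₃`.
      have h := hfix (-1) (by simp)
      simp only [circleAct, Complex.neg_re, Complex.one_re, Complex.neg_im, Complex.one_im,
        neg_zero, zero_smul, sub_zero, zero_add, neg_smul, one_smul, Prod.mk.injEq, true_and] at h
      have : IsAddTorsionFree V := .of_isTorsionFree ℝ V
      obtain rfl : v₂ = 0 := self_eq_neg.mp h.1.symm
      obtain rfl : v₃ = 0 := self_eq_neg.mp h.2.symm
      exact ⟨fun i hi => hp i ⟨hi, map_zero _, map_zero _⟩, rfl, rfl⟩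
    · rintro ⟨hv, h2, h3⟩
      dsimp only at hv h2 h3
      subst h2 h3
      exact ⟨fun i hi => hv i hi.1, fun z _ => by simp [circleAct]⟩
end
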